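/- Let d ≥ 5 and n ≥ 1. There is a number c = c(d,n) > 0 such that whenever A, B ⊂ Z^d are disjoint, A ∪ B has exactly n elements, A is connected in the nearest-neighbor graph of Z^d, and dist(A, B) ≥ 4^d·n, then for any distinct x, y ∈ A which are exposed in A ∪ B, H_{A∪B}(x) ≥ c·H_{A∪B}(y). -/

import Mathlib

open MeasureTheory

namespace HATFormal

/-- Points of the lattice `ℤ^d`. -/
abbrev Pt (d : ℕ) := Fin d → ℤ

/-- The `2d` unit steps of the simple random walk on `ℤ^d`. -/
def Dir (d : ℕ) : Set (Pt d) :=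
  {s | ∃ i : Fin d, s = Pi.single i 1 ∨ s = Pi.single i (-1)}

/-- The position, after `t` steps, of the walk started at `x` with steps `s`. -/
def wpos (d : ℕ) (x : Pt d) {T : ℕ} (s : Fin T → Pt d) (t : ℕ) : Pt d :=
  x + ∑ i ∈ Finset.univ.filter (fun i : Fin T => (i : ℕ) < t), s i

/-- The probability of an event `P` of the first `T` steps of simple random walk on `ℤ^d`. -/
noncomputable def prob (d T : ℕ) (P : (Fin T → Pt d) → Prop) : ℝ :=
  (Nat.card {s : Fin T → Pt d // (∀ i, s i ∈ Dir d) ∧ P s} : ℝ) / ((2 * d : ℕ) : ℝ) ^ T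

open Classical in
/-- `esc d A x = P_x(τ_A = ∞)` if `x ∈ A`, and `0` otherwise. -/
noncomputable def esc (d : ℕ) (A : Set (Pt d)) (x : Pt d) : ℝ :=
  if x ∈ A then ⨅ T : ℕ, prob d T (fun s => ∀ t, 1 ≤ t → t ≤ T → wpos d x s t ∉ A) else 0

/-- The capacity of `A`. -/
noncomputable def capa (d : ℕ) (A : Set (Pt d)) : ℝ := ∑' x : A, esc d A (x : Pt d)

/-- The harmonic measure `H_A(x) = esc_A(x) / cap_A`. -/
noncomputable def harm (d : ℕ) (A : Set (Pt d)) (x : Pt d) : ℝ := esc d A x / capa d A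

/-- `P_x(τ_W < ∞)`. -/
noncomputable def retProb (d : ℕ) (W : Set (Pt d)) (x : Pt d) : ℝ :=
  ∑' t : ℕ, prob d t (fun s => 1 ≤ t ∧ wpos d x s t ∈ W ∧
    ∀ u, 1 ≤ u → u < t → wpos d x s u ∉ W)

/-- `P_x(τ_W < ∞ and S_{τ_W − 1} = y)`. -/
noncomputable def hitFrom (d : ℕ) (W : Set (Pt d)) (x y : Pt d) : ℝ :=
  ∑' t : ℕ, prob d t (fun s => 1 ≤ t ∧ wpos d x s t ∈ W ∧ wpos d x s (t - 1) = y ∧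
    ∀ u, 1 ≤ u → u < t → wpos d x s u ∉ W)

/-- `P_x(τ_W < ∞ and S_{τ_W} ∈ T)`. -/
noncomputable def firstHitIn (d : ℕ) (W T : Set (Pt d)) (x : Pt d) : ℝ :=
  ∑' t : ℕ, prob d t (fun s => 1 ≤ t ∧ wpos d x s t ∈ W ∧ wpos d x s t ∈ T ∧
    ∀ u, 1 ≤ u → u < t → wpos d x s u ∉ W)

/-- `P_x(S_{τ_W − 1} = y ∣ τ_W < ∞)`. -/
noncomputable def transP (d : ℕ) (W : Set (Pt d)) (x y : Pt d) : ℝ :=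
  hitFrom d W x y / retProb d W x

/-- The Green's function of simple random walk on `ℤ^d`. -/
noncomputable def green (d : ℕ) (x : Pt d) : ℝ :=
  ∑' t : ℕ, prob d t (fun s => wpos d x s t = 0)

/-- Configurations: finite subsets of `ℤ^d`. -/
abbrev Conf (d : ℕ) := Finset (Pt d)

/-- `p_U(x, y)`, the probability that HAT activates at `x` and transports to `y`. -/
noncomputable def pHAT (d : ℕ) (U : Conf d) (x y : Pt d) : ℝ :=
  harm d (↑U) x * transP d ((↑U : Set (Pt d)) \ {x}) x y

open Classical in
/-- The transition probabilities of HAT. -/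
noncomputable def hatProb (d : ℕ) (U V : Conf d) : ℝ :=
  if V = U then ∑' z : Pt d, pHAT d U z z
  else ∑' x : Pt d, ∑' y : Pt d,
    if x ∈ U ∧ x ≠ y ∧ V = insert y (U.erase x) then pHAT d U x y else 0

instance (d : ℕ) : MeasurableSpace (Conf d) := ⊤

/-- `μ` is the law of HAT started from `U`. -/
def IsHATLaw (d : ℕ) (U : Conf d) (μ : Measure (ℕ → Conf d)) : Prop :=
  IsProbabilityMeasure μ ∧
  ∀ (t : ℕ) (u : ℕ → Conf d),
    μ {ω | ∀ s ≤ t, ω s = u s} =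
      (if u 0 = U then 1 else 0) *
        ∏ s ∈ Finset.range t, ENNReal.ofReal (hatProb d (u s) (u (s + 1)))

/-- A signed permutation plus translation of `ℤ^d`. -/
def SymImage (d : ℕ) (σ : Equiv.Perm (Fin d)) (ε : Fin d → ℤ) (v : Pt d) (x : Pt d) : Pt d :=
  fun i => v i + ε i * x (σ i)

/-- `SymEq d U V` holds when `V = gU` for a symmetry `g` of `ℤ^d`. -/
def SymEq (d : ℕ) (U V : Conf d) : Prop :=
  ∃ (σ : Equiv.Perm (Fin d)) (ε : Fin d → ℤ) (v : Pt d),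
    (∀ i, ε i = 1 ∨ ε i = -1) ∧ V = U.image (SymImage d σ ε v)

/-- Euclidean distance on `ℤ^d`. -/
noncomputable def dist0 (d : ℕ) (x y : Pt d) : ℝ :=
  Real.sqrt (∑ i, ((x i : ℝ) - (y i : ℝ)) ^ 2)

/-- Euclidean distance between finite subsets of `ℤ^d`. -/
noncomputable def setDist (d : ℕ) (A B : Finset (Pt d)) : ℝ :=
  sInf {r : ℝ | ∃ x ∈ A, ∃ y ∈ B, r = dist0 d x y}

/-- Euclidean diameter of a finite subset of `ℤ^d`. -/
noncomputable def diam0 (d : ℕ) (A : Finset (Pt d)) : ℝ :=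
  sSup {r : ℝ | ∃ x ∈ A, ∃ y ∈ A, r = dist0 d x y}

/-- Lattice (nearest-neighbor) adjacency in `ℤ^d`. -/
def latAdj (d : ℕ) (x y : Pt d) : Prop := (∑ i, (x i - y i).natAbs) = 1

/-- Exterior lattice boundary of a set. -/
def bdry (d : ℕ) (A : Set (Pt d)) : Set (Pt d) := {z | z ∉ A ∧ ∃ w ∈ A, latAdj d z w}

/-- Non-isolated configurations: some exposed element has a lattice neighbor in the set. -/
def NonIso (d : ℕ) (U : Conf d) : Prop :=
  ∃ x ∈ U, 0 < esc d (↑U) x ∧ ∃ y ∈ U, latAdj d x y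

/-- `C` is a clustering (ordered partition into nonempty clusters) of `U`. -/
def IsClusteringOf (d : ℕ) {k : ℕ} (C : Fin k → Finset (Pt d)) (U : Finset (Pt d)) : Prop :=
  (∀ i, (C i).Nonempty) ∧ (∀ i j, i ≠ j → Disjoint (C i) (C j)) ∧
    Finset.univ.biUnion C = U

/-- `C^{≠ i}`, the union of the clusters other than `i`. -/
def others (d : ℕ) {k : ℕ} (C : Fin k → Finset (Pt d)) (i : Fin k) : Finset (Pt d) :=
  Finset.univ.biUnion fun j => if j = i then ∅ else C j

/-- The separation of a clustering. -/
noncomputable def sep (d : ℕ) {k : ℕ} (C : Fin k → Finset (Pt d)) : ℝ :=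
  ⨅ i, setDist d (C i) (others d C i)

/-- `(a, b)` separated dimer-or-trimer (DOT) clusterings. -/
def IsDOT (d : ℕ) {k : ℕ} (C : Fin k → Finset (Pt d)) (a b : ℝ) : Prop :=
  (∀ i, (C i).card = 2 ∨ (C i).card = 3) ∧ a ≤ sep d C ∧
    ∀ i, diam0 d (C i) ≤ b * Real.log (setDist d (C i) (others d C i))

/-- Clusterings with an unspecified number of clusters. -/
abbrev ClusteringS (d : ℕ) := Σ k : ℕ, Fin k → Finset (Pt d)

/-- `π(C)`, the union of the clusters of `C`. -/
def confOf (d : ℕ) (C : ClusteringS d) : Conf d := Finset.univ.biUnion C.2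

/-- `C ∈ 𝒞(U, a, b)`. -/
def InC (d : ℕ) (U : Conf d) (a b : ℝ) (C : ClusteringS d) : Prop :=
  IsClusteringOf d C.2 U ∧ IsDOT d C.2 a b

/-- `U ∈ 𝒰_{d,n}(a, b)`. -/
def InU (d n : ℕ) (a b : ℝ) (U : Conf d) : Prop :=
  U.card = n ∧ ∃ C : ClusteringS d, InC d U a b C

/-- `C` is a clustering of an `n`-element configuration. -/
def IsClusteringConf (d n : ℕ) (C : ClusteringS d) : Prop :=
  (∀ i, (C.2 i).Nonempty) ∧ (∀ i j, i ≠ j → Disjoint (C.2 i) (C.2 j)) ∧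
    (confOf d C).card = n

open Classical in
/-- One step of the natural clustering. -/
noncomputable def clustStep (d : ℕ) (Ut Ut1 : Conf d) (C : ClusteringS d) : ClusteringS d :=
  if Ut1 = Ut then C
  else if h : ∃ p : Pt d × Pt d × Fin C.1,
      Ut \ Ut1 = {p.1} ∧ Ut1 \ Ut = {p.2.1} ∧ p.1 ∈ C.2 p.2.2 then
    ⟨C.1, Function.update C.2 h.choose.2.2
      (insert h.choose.2.1 ((C.2 h.choose.2.2).erase h.choose.1))⟩
  else ⟨1, fun _ => Ut1⟩

/-- The natural clustering of the trajectory `ω` with initial clustering `C0`. -/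
noncomputable def natClust (d : ℕ) (ω : ℕ → Conf d) (C0 : ClusteringS d) : ℕ → ClusteringS d
  | 0 => C0
  | t + 1 => clustStep d (ω t) (ω (t + 1)) (natClust d ω C0 t)

/-- `a_s = s^{1/2 − n^{−100}} + 100 n`. -/
noncomputable def aSep (n s : ℕ) : ℝ :=
  (s : ℝ) ^ ((1 : ℝ) / 2 - (n : ℝ) ^ (-(100 : ℝ))) + 100 * n

/-- `C^{i, x, y}`: remove `x` from cluster `i` of `C` and add `y` to that cluster. -/
def updC (d : ℕ) (C : ClusteringS d) (i : Fin C.1) (x y : Pt d) : ClusteringS d :=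
  ⟨C.1, Function.update C.2 i (insert y ((C.2 i).erase x))⟩

open Classical in
/-- The transition probabilities of the lifting of HAT to clusterings. -/
noncomputable def liftProb (d : ℕ) (E0 E1 : ClusteringS d) : ℝ :=
  ∑' x : Pt d, ∑' y : Pt d,
    if ∃ i : Fin E0.1, x ∈ E0.2 i ∧ E1 = updC d E0 i x y
    then pHAT d (confOf d E0) x y else 0

/-- The capacity of a clustering: the sum of the capacities of its clusters. -/
noncomputable def capS (d : ℕ) (C : ClusteringS d) : ℝ := ∑ i, capa d (↑(C.2 i))

/-- `H_C(i, x) = esc_{C^i}(x) / cap_C`. -/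
noncomputable def harmS (d : ℕ) (C : ClusteringS d) (i : Fin C.1) (x : Pt d) : ℝ :=
  esc d (↑(C.2 i)) x / capS d C

/-- `q_C(i, x, y)`. -/
noncomputable def qIHAT (d : ℕ) (C : ClusteringS d) (i : Fin C.1) (x y : Pt d) : ℝ :=
  harmS d C i x * transP d ((↑(C.2 i) : Set (Pt d)) \ {x}) x y

open Classical in
/-- The transition probabilities of intracluster HAT (IHAT). -/
noncomputable def ihatProb (d : ℕ) (D E : ClusteringS d) : ℝ :=
  ∑' x : Pt d, ∑' y : Pt d, ∑ i : Fin D.1,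
    if x ∈ D.2 i ∧ E = updC d D i x y then qIHAT d D i x y else 0

instance (d : ℕ) : MeasurableSpace (ClusteringS d) := ⊤

open Classical in
/-- `μ` is the law of the lifted HAT chain started from `E0`. -/
def IsLiftLaw (d : ℕ) (E0 : ClusteringS d) (μ : Measure (ℕ → ClusteringS d)) : Prop :=
  IsProbabilityMeasure μ ∧
  ∀ (t : ℕ) (u : ℕ → ClusteringS d),
    μ {ω | ∀ s ≤ t, ω s = u s} =
      (if u 0 = E0 then 1 else 0) *
        ∏ s ∈ Finset.range t, ENNReal.ofReal (liftProb d (u s) (u (s + 1)))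

open Classical in
/-- `μ` is the law of intracluster HAT started from `D0`. -/
def IsIHATLaw (d : ℕ) (D0 : ClusteringS d) (μ : Measure (ℕ → ClusteringS d)) : Prop :=
  IsProbabilityMeasure μ ∧
  ∀ (t : ℕ) (u : ℕ → ClusteringS d),
    μ {ω | ∀ s ≤ t, ω s = u s} =
      (if u 0 = D0 then 1 else 0) *
        ∏ s ∈ Finset.range t, ENNReal.ofReal (ihatProb d (u s) (u (s + 1)))

/-- `Pairs(E0, E1)`. -/
def Pairs (d : ℕ) (E0 E1 : ClusteringS d) : Set (Pt d × Pt d) :=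
  {p | 0 < pHAT d (confOf d E0) p.1 p.2 ∧
    ∃ i : Fin E0.1, p.1 ∈ E0.2 i ∧ E1 = updC d E0 i p.1 p.2}

/-- `Triples(E0, E1)`. -/
def Triples (d : ℕ) (E0 E1 : ClusteringS d) : Set (Fin E0.1 × Pt d × Pt d) :=
  {q | 0 < qIHAT d E0 q.1 q.2.1 q.2.2 ∧ E1 = updC d E0 q.1 q.2.1 q.2.2}

/-- The first standard basis vector of `ℤ^d`. -/
def e1v (d : ℕ) : Pt d := fun i => if (i : ℕ) = 0 then 1 else 0

/-- Reference dimers and trimers. -/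
def Ref (d : ℕ) : Set (Finset (Pt d)) :=
  {A | ∃ x : Pt d, A = {x, x + e1v d} ∨ A = {x, x + e1v d, x + e1v d + e1v d}}

/-- *-adjacency in `ℤ^d`: distinct points differing by at most one in each coordinate. -/
def starAdj (d : ℕ) (x y : Pt d) : Prop := x ≠ y ∧ ∀ i, (x i - y i).natAbs ≤ 1

/-- The *-visible boundary of `A`. -/
def visBdry (d : ℕ) (A : Finset (Pt d)) : Set (Pt d) :=
  {x | (∃ y ∈ A, starAdj d x y) ∧
    ∃ γ : ℕ → Pt d, γ 0 = x ∧ (∀ t, latAdj d (γ t) (γ (t + 1))) ∧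
      (∀ t, γ t ∉ A) ∧ ∀ r : ℝ, ∃ t, r < dist0 d (γ t) 0}

/-- `A` is connected in the nearest-neighbor graph of `ℤ^d`. -/
def LatConnected (d : ℕ) (A : Finset (Pt d)) : Prop :=
  ∀ x ∈ A, ∀ y ∈ A, ∃ (L : ℕ) (γ : ℕ → Pt d), γ 0 = x ∧ γ L = y ∧
    (∀ t < L, latAdj d (γ t) (γ (t + 1))) ∧ ∀ t ≤ L, γ t ∈ A

/-- Strict lexicographic order on `ℤ^d`. -/
def lexLt (d : ℕ) (x y : Pt d) : Prop :=
  ∃ i : Fin d, (∀ j, j < i → x j = y j) ∧ x i < y i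

/-- `x` is the lex (least) element of `A`. -/
def IsLex (d : ℕ) (A : Finset (Pt d)) (x : Pt d) : Prop :=
  x ∈ A ∧ ∀ y ∈ A, y ≠ x → lexLt d x y

/-! ### Auxiliary material for the proof -/

/-- Directions indexed by `Fin d × Bool`. -/
def dirv (d : ℕ) (a : Fin d × Bool) : Pt d := Pi.single a.1 (if a.2 then 1 else -1)

lemma dirv_mem (d : ℕ) (a : Fin d × Bool) : dirv d a ∈ Dir d := by
  refine ⟨a.1, ?_⟩
  rcases a with ⟨i, b⟩
  cases b <;> simp [dirv]

lemma dirv_surj (d : ℕ) {s : Pt d} (hs : s ∈ Dir d) : ∃ a, dirv d a = s := by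
  obtain ⟨i, h | h⟩ := hs
  · exact ⟨(i, true), by simp [dirv, h]⟩
  · exact ⟨(i, false), by simp [dirv, h]⟩

lemma dirv_inj (d : ℕ) : Function.Injective (dirv d) := by
  rintro ⟨i, b⟩ ⟨j, c⟩ h
  have h1 := congrFun h i
  by_cases hij : i = j
  · subst hij
    cases b <;> cases c <;> simp [dirv] at h1 ⊢
  · exfalso
    cases b <;> cases c <;> simp [dirv, hij] at h1

open Classical in
lemma prob_eq (d T : ℕ) (P : (Fin T → Pt d) → Prop) :
    prob d T P = (∑ w : Fin T → Fin d × Bool, if P (fun i => dirv d (w i)) then (1 : ℝ) else 0)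
      / ((2 * d : ℕ) : ℝ) ^ T := by
  unfold prob
  congr 1
  let F : {w : Fin T → Fin d × Bool // P (fun i => dirv d (w i))} →
      {s : Fin T → Pt d // (∀ i, s i ∈ Dir d) ∧ P s} :=
    fun w => ⟨fun i => dirv d (w.1 i), fun i => dirv_mem d _, w.2⟩
  have hF : Function.Bijective F := by
    constructor
    · rintro ⟨w, hw⟩ ⟨w', hw'⟩ h
      apply Subtype.ext
      funext i
      exact dirv_inj d (congrFun (congrArg Subtype.val h) i)
    · rintro ⟨s, hs, hP⟩
      choose w hw using fun i => dirv_surj d (hs i)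
      have : (fun i => dirv d (w i)) = s := funext hw
      exact ⟨⟨w, by rw [this]; exact hP⟩, Subtype.ext this⟩
  rw [← Nat.card_congr (Equiv.ofBijective F hF), Nat.card_eq_fintype_card, Fintype.card_subtype]
  simp

lemma wpos_zero (d : ℕ) (x : Pt d) {T : ℕ} (s : Fin T → Pt d) : wpos d x s 0 = x := by
  simp [wpos]

lemma wpos_cons (d : ℕ) (x a : Pt d) {T : ℕ} (s : Fin T → Pt d) (t : ℕ) :
    wpos d x (Fin.cons a s : Fin (T + 1) → Pt d) (t + 1) = wpos d (x + a) s t := by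
  unfold wpos
  rw [Finset.sum_filter, Finset.sum_filter, Fin.sum_univ_succ]
  simp [add_assoc]

/-- Probability of avoiding `U` at times `1, …, T`. -/
noncomputable def qq (d : ℕ) (U : Set (Pt d)) (T : ℕ) (x : Pt d) : ℝ :=
  prob d T (fun s => ∀ t, 1 ≤ t → t ≤ T → wpos d x s t ∉ U)

lemma qq_zero (d : ℕ) (U : Set (Pt d)) (x : Pt d) : qq d U 0 x = 1 := by
  unfold qq
  rw [prob_eq]
  have : ∀ w : Fin 0 → Fin d × Bool,
      (∀ t, 1 ≤ t → t ≤ 0 → wpos d x (fun i => dirv d (w i)) t ∉ U) :=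
    fun w t h1 h2 => by omega
  simp only [if_pos (this _)]
  simp

lemma qq_nonneg (d : ℕ) (U : Set (Pt d)) (T : ℕ) (x : Pt d) : 0 ≤ qq d U T x := by
  unfold qq prob
  positivity

lemma qq_succ (d : ℕ) (hd : 0 < d) (U : Set (Pt d)) [DecidablePred (· ∈ U)] (T : ℕ) (x : Pt d) :
    (2 * d : ℝ) * qq d U (T + 1) x =
      ∑ a : Fin d × Bool, if x + dirv d a ∈ U then 0 else qq d U T (x + dirv d a) := by
  classical
  unfold qq
  simp only [prob_eq]
  have hd' : (0 : ℝ) < d := by exact_mod_cast hd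
  rw [← (Fin.consEquiv (fun _ : Fin (T + 1) => Fin d × Bool)).sum_comp, Fintype.sum_prod_type,
    pow_succ]
  push_cast
  rw [mul_div_assoc', mul_comm (2 * (d : ℝ)), mul_div_mul_right _ _ (by positivity),
    Finset.sum_div]
  refine Finset.sum_congr rfl fun a _ => ?_
  have key : ∀ w : Fin T → Fin d × Bool,
      (∀ t, 1 ≤ t → t ≤ T + 1 → wpos d x (fun i => dirv d
        ((Fin.consEquiv (fun _ : Fin (T + 1) => Fin d × Bool)) (a, w) i)) t ∉ U) ↔
      (x + dirv d a ∉ U ∧ ∀ t, 1 ≤ t → t ≤ T →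
        wpos d (x + dirv d a) (fun i => dirv d (w i)) t ∉ U) := by
    intro w
    have e : (fun i => dirv d ((Fin.consEquiv (fun _ : Fin (T + 1) => Fin d × Bool)) (a, w) i))
        = (Fin.cons (dirv d a) (fun i => dirv d (w i)) : Fin (T + 1) → Pt d) := by
      funext i
      refine Fin.cases ?_ (fun j => ?_) i <;> simp [Fin.consEquiv]
    rw [e]
    constructor
    · intro h
      constructor
      · have := h 1 le_rfl (by omega)
        have e2 := wpos_cons d x (dirv d a) (fun i => dirv d (w i)) 0
        rw [wpos_zero, zero_add] at e2
        rwa [e2] at this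
      · intro t h1 h2
        have := h (t + 1) (by omega) (by omega)
        rwa [wpos_cons] at this
    · rintro ⟨h0, h⟩ t h1 h2
      obtain ⟨t, rfl⟩ : ∃ u, t = u + 1 := ⟨t - 1, by omega⟩
      rw [wpos_cons]
      rcases Nat.eq_zero_or_pos t with rfl | ht
      · rwa [wpos_zero]
      · exact h t ht (by omega)
  simp only [key]
  by_cases hU : x + dirv d a ∈ U
  · simp [hU]
  · simp only [hU, not_false_eq_true, true_and, if_false]
    congr 1
    refine Finset.sum_congr rfl fun w _ => ?_
    congr 1

/-- Squared Euclidean norm. -/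
noncomputable def sqn (d : ℕ) (z : Pt d) : ℝ := ∑ i, (z i : ℝ) ^ 2

lemma sqn_nonneg (d : ℕ) (z : Pt d) : 0 ≤ sqn d z := by unfold sqn; positivity

lemma sqn_add (d : ℕ) (z : Pt d) (i : Fin d) (e : ℤ) :
    sqn d (z + Pi.single i e) = sqn d z + 2 * e * z i + e ^ 2 := by
  unfold sqn
  have : ∀ j, (((z + Pi.single i e : Pt d) j : ℤ) : ℝ) ^ 2
      = (z j : ℝ) ^ 2 + if j = i then (2 * e * z i + e ^ 2 : ℝ) else 0 := by
    intro j
    by_cases h : j = i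
    · subst h; simp; ring
    · simp [h]
  simp only [this, Finset.sum_add_distrib]
  simp
  ring

lemma sum_dir (d : ℕ) (f : Pt d → ℝ) (x : Pt d) :
    ∑ a : Fin d × Bool, f (x + dirv d a)
      = ∑ i : Fin d, (f (x + Pi.single i 1) + f (x + Pi.single i (-1))) := by
  rw [Fintype.sum_prod_type]
  simp [dirv]

/-- The superharmonic function. -/
noncomputable def hh (d : ℕ) (z : Pt d) : ℝ := 15 / (sqn d z + 15)

lemma hh_super (d : ℕ) (hd : 5 ≤ d) (z : Pt d) :
    ∑ a : Fin d × Bool, hh d (z + dirv d a) ≤ 2 * d * hh d z := by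
  rw [sum_dir]
  have hd' : (5 : ℝ) ≤ d := by exact_mod_cast hd
  obtain ⟨M, hM⟩ : ∃ M, M = sqn d z + 16 := ⟨_, rfl⟩
  have h0 := sqn_nonneg d z
  have hM16 : 16 ≤ M := by linarith
  have term : ∀ i : Fin d, hh d (z + Pi.single i 1) + hh d (z + Pi.single i (-1))
      ≤ 15 * (2 / (M - 1)) * (1 + (-1 / M + 5 * (z i : ℝ) ^ 2 / M ^ 2)) := by
    intro i
    have hz : (z i : ℝ) ^ 2 ≤ sqn d z := by
      unfold sqn
      exact Finset.single_le_sum (f := fun i => (z i : ℝ) ^ 2) (fun j _ => sq_nonneg _)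
        (Finset.mem_univ i)
    unfold hh
    rw [sqn_add, sqn_add]
    set y : ℝ := (z i : ℝ) with hy
    have hs : sqn d z = M - 16 := by linarith
    rw [hs] at hz ⊢
    push_cast
    have hy2 : 4 * y ^ 2 < M ^ 2 := by nlinarith
    have p1 : 0 < M + 2 * y := by nlinarith [abs_lt_of_sq_lt_sq (a := 2 * y) (b := M) (by nlinarith) (by linarith), neg_abs_le (2*y), abs_lt.1 (abs_lt_of_sq_lt_sq (a := 2 * y) (b := M) (by nlinarith) (by linarith)) |>.1]
    have p2 : 0 < M - 2 * y := by nlinarith [(abs_lt.1 (abs_lt_of_sq_lt_sq (a := 2 * y) (b := M) (by nlinarith) (by linarith))).2]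
    have e1 : 15 / (M - 16 + 2 * 1 * y + 1 ^ 2 + 15) + 15 / (M - 16 + 2 * -1 * y + (-1) ^ 2 + 15)
        = 30 * M / (M ^ 2 - 4 * y ^ 2) := by
      rw [show M - 16 + 2 * 1 * y + 1 ^ 2 + 15 = M + 2 * y by ring,
        show M - 16 + 2 * -1 * y + (-1) ^ 2 + 15 = M - 2 * y by ring,
        show M ^ 2 - 4 * y ^ 2 = (M + 2 * y) * (M - 2 * y) by ring,
        div_add_div _ _ p1.ne' p2.ne']
      congr 1
      ring
    rw [e1]
    have hM1 : 0 < M - 1 := by linarith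
    have e2 : 15 * (2 / (M - 1)) * (1 + (-1 / M + 5 * y ^ 2 / M ^ 2))
        = 30 * (M ^ 2 - M + 5 * y ^ 2) / ((M - 1) * M ^ 2) := by
      field_simp
      ring
    rw [e2, div_le_div_iff₀ (by linarith) (by positivity)]
    have hs0 : 0 ≤ y ^ 2 := sq_nonneg y
    have : 0 ≤ y ^ 2 * (M ^ 2 + 4 * M - 20 * y ^ 2) := mul_nonneg hs0 (by nlinarith)
    nlinarith
  refine (Finset.sum_le_sum fun i _ => term i).trans ?_
  rw [← Finset.mul_sum, Finset.sum_add_distrib, Finset.sum_add_distrib,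
    ← Finset.sum_div (f := fun i : Fin d => 5 * (z i : ℝ) ^ 2), ← Finset.mul_sum]
  have hs : ∑ i, (z i : ℝ) ^ 2 = M - 16 := by
    have : sqn d z = M - 16 := by linarith
    exact this
  rw [hs]
  unfold hh
  rw [show sqn d z + 15 = M - 1 by linarith]
  simp only [Finset.sum_const, Finset.card_univ, Fintype.card_fin, nsmul_eq_mul]
  have hle : (d : ℝ) * 1 + (d * (-1 / M) + 5 * (M - 16) / M ^ 2) ≤ d := by
    have : (d * (-1 / M) + 5 * (M - 16) / M ^ 2) = ((5 - d) * M - 80) / M ^ 2 := by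
      field_simp
      ring
    have h2 : ((5 - d) * M - 80) / M ^ 2 ≤ 0 :=
      div_nonpos_of_nonpos_of_nonneg (by nlinarith) (by positivity)
    linarith
  have hpos : 0 ≤ 15 * (2 / (M - 1)) := by
    have : 0 < M - 1 := by linarith
    positivity
  calc _ ≤ 15 * (2 / (M - 1)) * d := mul_le_mul_of_nonneg_left hle hpos
    _ = _ := by ring

lemma hh_nonneg (d : ℕ) (z : Pt d) : 0 ≤ hh d z := by
  have := sqn_nonneg d z
  unfold hh
  positivity

lemma hh_zero (d : ℕ) : hh d 0 = 1 := by
  simp [hh, sqn]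

/-- Lower bound on the avoidance probability through the superharmonic function. -/
lemma qq_lower (d : ℕ) (hd : 5 ≤ d) (U : Finset (Pt d)) (T : ℕ) (z : Pt d) :
    1 - ∑ u ∈ U, hh d (z - u) ≤ qq d (↑U) T z := by
  classical
  induction T generalizing z with
  | zero =>
    rw [qq_zero]
    have := Finset.sum_nonneg (fun u (_ : u ∈ U) => hh_nonneg d (z - u))
    linarith
  | succ T ih =>
    have hd0 : (0 : ℝ) < 2 * d := by
      have : 0 < d := by omega
      positivity
    refine le_of_mul_le_mul_left ?_ hd0
    rw [qq_succ d (by omega)]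
    have step : ∀ a : Fin d × Bool, 1 - ∑ u ∈ U, hh d (z + dirv d a - u) ≤
        if z + dirv d a ∈ (↑U : Set (Pt d)) then 0 else qq d (↑U) T (z + dirv d a) := by
      intro a
      split_ifs with h
      · have := Finset.single_le_sum (f := fun u => hh d (z + dirv d a - u))
          (fun u _ => hh_nonneg d _) (Finset.mem_coe.1 h)
        simp only [sub_self, hh_zero] at this
        linarith
      · exact ih _
    refine le_trans ?_ (Finset.sum_le_sum fun a _ => step a)
    rw [Finset.sum_sub_distrib, Finset.sum_comm]
    have h2 : ∑ u ∈ U, ∑ a : Fin d × Bool, hh d (z + dirv d a - u)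
        ≤ ∑ u ∈ U, 2 * d * hh d (z - u) := by
      refine Finset.sum_le_sum fun u _ => ?_
      have := hh_super d hd (z - u)
      simpa only [sub_add_eq_add_sub] using this
    rw [← Finset.mul_sum] at h2
    have h3 : ∑ a : Fin d × Bool, (1 : ℝ) = 2 * d := by
      simp [Fintype.card_prod, mul_comm]
    rw [h3]
    linarith

open Classical in
/-- Points reachable from `x` in at most `k` steps avoiding `U`. -/
noncomputable def reach (d : ℕ) (U : Finset (Pt d)) (x : Pt d) : ℕ → Finset (Pt d)
  | 0 => {x}
  | k + 1 => reach d U x k ∪ (((reach d U x k) ×ˢ (Finset.univ : Finset (Fin d × Bool))).image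
      (fun p => p.1 + dirv d p.2)).filter (fun v => v ∉ U)

lemma mem_reach_succ (d : ℕ) (U : Finset (Pt d)) (x : Pt d) (k : ℕ) (v : Pt d) :
    v ∈ reach d U x (k + 1) ↔ v ∈ reach d U x k ∨
      (∃ w ∈ reach d U x k, ∃ a, w + dirv d a = v) ∧ v ∉ U := by
  classical
  simp only [reach, Finset.mem_union, Finset.mem_filter, Finset.mem_image, Finset.mem_product,
    Finset.mem_univ, and_true]
  constructor
  · rintro (h | ⟨⟨⟨w, a⟩, hw, h⟩, hv⟩)
    · exact Or.inl h
    · exact Or.inr ⟨⟨w, hw, a, h⟩, hv⟩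
  · rintro (h | ⟨⟨w, hw, a, h⟩, hv⟩)
    · exact Or.inl h
    · exact Or.inr ⟨⟨(w, a), hw, h⟩, hv⟩

lemma reach_self (d : ℕ) (U : Finset (Pt d)) (x : Pt d) (k : ℕ) : x ∈ reach d U x k := by
  induction k with
  | zero => simp [reach]
  | succ k ih => exact (mem_reach_succ ..).2 (Or.inl ih)

lemma reach_lower (d : ℕ) (hd : 0 < d) (U : Finset (Pt d)) (x : Pt d) (k : ℕ) :
    ∀ v ∈ reach d U x k, ∀ c : ℝ, 0 ≤ c → (∀ T, c ≤ qq d (↑U) T v) →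
      ∀ T, c * (1 / (2 * d : ℝ)) ^ k ≤ qq d (↑U) T x := by
  classical
  have hd1 : (1 : ℝ) ≤ d := by exact_mod_cast hd
  have hδ0 : (0 : ℝ) ≤ 1 / (2 * d) := by positivity
  have hδ1 : (1 : ℝ) / (2 * d) ≤ 1 := by
    rw [div_le_one (by positivity)]; linarith
  induction k with
  | zero =>
    intro v hv c _ h T
    simp only [reach, Finset.mem_singleton] at hv
    subst hv
    simpa using h T
  | succ k ih =>
    intro v hv c hc h T
    rcases (mem_reach_succ ..).1 hv with hv | ⟨⟨w, hw, a, rfl⟩, hvU⟩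
    · refine le_trans ?_ (ih v hv c hc h T)
      rw [pow_succ, ← mul_assoc]
      exact mul_le_of_le_one_right (by positivity) hδ1
    · rw [pow_succ', ← mul_assoc]
      refine ih w hw _ (by positivity) ?_ T
      intro S
      cases S with
      | zero =>
        have := h 0
        rw [qq_zero] at this ⊢
        exact mul_le_one₀ this hδ0 hδ1
      | succ S =>
        have e := qq_succ d hd (↑U) S w
        have := Finset.single_le_sum (f := fun a : Fin d × Bool =>
          if w + dirv d a ∈ (↑U : Set (Pt d)) then 0 else qq d (↑U) S (w + dirv d a))
          (fun b _ => by
            split_ifs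
            · exact le_rfl
            · exact qq_nonneg ..) (Finset.mem_univ a)
        rw [← e] at this
        simp only [Finset.mem_coe, hvU, if_false] at this
        have h2 := (h S).trans this
        rw [mul_one_div, div_le_iff₀ (by positivity)]
        linarith

/-- If the reachable region is finite, then the walk does not avoid `U` for long. -/
lemma stable_bound (d : ℕ) (hd : 0 < d) (U V : Finset (Pt d))
    (hV : ∀ v ∈ V, ∀ a, v + dirv d a ∉ U → v + dirv d a ∈ V) :
    ∃ C : ℝ, ∀ T : ℕ, ∀ v ∈ V, T * qq d (↑U) T v ≤ C := by
  classical
  have hd1 : (0 : ℝ) < d := by exact_mod_cast hd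
  obtain ⟨R, hR⟩ : ∃ R : ℝ, ∀ v ∈ U ∪ V, sqn d v ≤ R := by
    refine ⟨∑ v ∈ U ∪ V, sqn d v, fun v hv => ?_⟩
    exact Finset.single_le_sum (f := fun v => sqn d v) (fun v _ => sqn_nonneg d v) hv
  refine ⟨R, ?_⟩
  suffices H : ∀ T : ℕ, ∀ v ∈ V, T * qq d (↑U) T v ≤ R - sqn d v ∧ qq d (↑U) T v ≤ 1 by
    intro T v hv
    have := (H T v hv).1
    linarith [sqn_nonneg d v]
  intro T
  induction T with
  | zero =>
    intro v hv
    rw [qq_zero]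
    have := hR v (Finset.mem_union_right _ hv)
    simp
    exact this
  | succ T ih =>
    intro v hv
    have e := qq_succ d hd (↑U) T v
    have hcard : ∑ a : Fin d × Bool, (1 : ℝ) = 2 * d := by
      simp [Fintype.card_prod, mul_comm]
    constructor
    · have hs : ∑ a : Fin d × Bool, (R - sqn d (v + dirv d a) + 1) = 2 * d * (R - sqn d v) := by
        rw [sum_dir d (fun z => R - sqn d z + 1) v]
        simp only [sqn_add]
        have : ∀ i : Fin d, (R - (sqn d v + 2 * ((1 : ℤ) : ℝ) * v i + ((1 : ℤ) : ℝ) ^ 2) + 1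
            + (R - (sqn d v + 2 * ((-1 : ℤ) : ℝ) * v i + ((-1 : ℤ) : ℝ) ^ 2) + 1))
            = 2 * (R - sqn d v) := by
          intro i; push_cast; ring
        simp only [this]
        simp
        ring
      refine le_of_mul_le_mul_left ?_ (show (0 : ℝ) < 2 * d by positivity)
      rw [← hs]
      calc 2 * (d : ℝ) * (((T + 1 : ℕ) : ℝ) * qq d (↑U) (T + 1) v)
          = ((T + 1 : ℕ) : ℝ) * (2 * d * qq d (↑U) (T + 1) v) := by ring
        _ ≤ _ := by
          rw [e, Finset.mul_sum]
          refine Finset.sum_le_sum fun a _ => ?_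
          split_ifs with h
          · have := hR _ (Finset.mem_union_left _ (Finset.mem_coe.1 h))
            linarith
          · obtain ⟨h1, h2⟩ := ih _ (hV v hv a (fun h' => h (Finset.mem_coe.2 h')))
            push_cast
            linarith
    · refine le_of_mul_le_mul_left ?_ (show (0 : ℝ) < 2 * d by positivity)
      rw [e, mul_one, ← hcard]
      refine Finset.sum_le_sum fun a _ => ?_
      split_ifs with h
      · norm_num
      · exact (ih _ (hV v hv a (fun h' => h (Finset.mem_coe.2 h')))).2

/-- The points at squared distance less than `R` from `U` are few. -/
lemma near_card (d : ℕ) (U V : Finset (Pt d)) (R : ℕ)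
    (h : ∀ v ∈ V, ∃ u ∈ U, sqn d (v - u) < R) : V.card ≤ U.card * (2 * R + 1) ^ d := by
  classical
  have hsub : V ⊆ U.biUnion (fun u => Fintype.piFinset
      (fun i => Finset.Icc (u i - (R : ℤ)) (u i + R))) := by
    intro v hv
    obtain ⟨u, hu, hr⟩ := h v hv
    refine Finset.mem_biUnion.2 ⟨u, hu, Fintype.mem_piFinset.2 fun i => ?_⟩
    have h1 : (((v - u) i : ℤ) : ℝ) ^ 2 ≤ sqn d (v - u) :=
      Finset.single_le_sum (f := fun i => (((v - u) i : ℤ) : ℝ) ^ 2) (fun j _ => sq_nonneg _)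
        (Finset.mem_univ i)
    have h2 : ((v - u) i) ^ 2 < (R : ℤ) := by exact_mod_cast h1.trans_lt hr
    rw [Pi.sub_apply] at h2
    rw [Finset.mem_Icc]
    have h4 : v i - u i ≤ (v i - u i) ^ 2 := Int.le_self_sq _
    have h5 : -(v i - u i) ≤ (v i - u i) ^ 2 := by
      have := Int.le_self_sq (-(v i - u i))
      rwa [neg_sq] at this
    constructor <;> linarith
  refine (Finset.card_le_card hsub).trans (Finset.card_biUnion_le_card_mul _ _ _ fun u _ => ?_)
  rw [Fintype.card_piFinset]
  have : ∀ i : Fin d, (Finset.Icc (u i - (R : ℤ)) (u i + R)).card = 2 * R + 1 := by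
    intro i
    rw [Int.card_Icc]
    omega
  simp [this]

/-- Uniform lower bound for positive escape probabilities. -/
lemma esc_lower (d n : ℕ) (hd : 5 ≤ d) (U : Finset (Pt d)) (hU : U.card = n)
    (x : Pt d) (hx : 0 < esc d (↑U) x) :
    1 / 2 * (1 / (2 * d : ℝ)) ^ (n * (2 * (30 * n) + 1) ^ d) ≤ esc d (↑U) x := by
  classical
  set N := n * (2 * (30 * n) + 1) ^ d with hN
  have hd0 : 0 < d := by omega
  have hd1 : (1 : ℝ) ≤ d := by exact_mod_cast hd0
  have hxU : x ∈ (↑U : Set (Pt d)) := by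
    by_contra h
    simp only [esc, h, if_false, lt_self_iff_false] at hx
  have hesc : esc d (↑U) x = ⨅ T : ℕ, qq d (↑U) T x := by
    simp only [esc, hxU, if_true, qq]
  rw [hesc] at hx ⊢
  have hbdd : BddBelow (Set.range fun T : ℕ => qq d (↑U) T x) :=
    ⟨0, by rintro _ ⟨T, rfl⟩; exact qq_nonneg ..⟩
  by_cases hfar : ∃ v ∈ reach d U x N, ∀ u ∈ U, ((30 * n : ℕ) : ℝ) ≤ sqn d (v - u)
  · obtain ⟨v, hv, hfar⟩ := hfar
    refine le_ciInf fun T => reach_lower d hd0 U x N v hv (1 / 2) (by norm_num) ?_ T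
    intro S
    refine le_trans ?_ (qq_lower d hd U S v)
    have : ∑ u ∈ U, hh d (v - u) ≤ ∑ u ∈ U, 15 / ((30 * n : ℝ) + 15) := by
      refine Finset.sum_le_sum fun u hu => ?_
      unfold hh
      have := hfar u hu
      push_cast at this
      gcongr
    rw [Finset.sum_const, hU, nsmul_eq_mul] at this
    have h2 : (n : ℝ) * (15 / (30 * n + 15)) ≤ 1 / 2 := by
      rw [mul_div_assoc', div_le_div_iff₀ (by positivity) (by norm_num)]
      linarith
    linarith
  · exfalso
    push Not at hfar
    have hcard : (reach d U x N).card ≤ N := by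
      rw [hN, ← hU]
      refine near_card d U _ _ ?_
      rw [hU]
      exact hfar
    have hst : ∃ k, reach d U x (k + 1) = reach d U x k := by
      by_contra hne
      push Not at hne
      have hgrow : ∀ k, k + 1 ≤ (reach d U x k).card := by
        intro k
        induction k with
        | zero => simp [reach]
        | succ k ih =>
          have hss : reach d U x k ⊂ reach d U x (k + 1) :=
            lt_of_le_of_ne (fun v hv => (mem_reach_succ ..).2 (Or.inl hv)) (hne k).symm
          have := Finset.card_lt_card hss
          omega
      have := hgrow N
      omega
    obtain ⟨k, hk⟩ := hst
    obtain ⟨C, hC⟩ := stable_bound d hd0 U (reach d U x k) (by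
      intro v hv a ha
      rw [← hk]
      exact (mem_reach_succ ..).2 (Or.inr ⟨⟨v, hv, a, rfl⟩, ha⟩))
    obtain ⟨T, hT⟩ := exists_nat_gt (C / ⨅ T : ℕ, qq d (↑U) T x)
    rw [div_lt_iff₀ hx] at hT
    have h1 := hC T x (reach_self ..)
    have h2 := ciInf_le hbdd T
    have h3 : (T : ℝ) * (⨅ T : ℕ, qq d (↑U) T x) ≤ T * qq d (↑U) T x :=
      mul_le_mul_of_nonneg_left h2 (Nat.cast_nonneg T)
    linarith

lemma esc_le_one (d : ℕ) (U : Set (Pt d)) (x : Pt d) : esc d U x ≤ 1 := by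
  classical
  unfold esc
  split_ifs
  · have hbdd : BddBelow (Set.range fun T : ℕ => qq d U T x) :=
      ⟨0, by rintro _ ⟨T, rfl⟩; exact qq_nonneg ..⟩
    have := ciInf_le hbdd 0
    rw [qq_zero] at this
    exact this
  · norm_num

lemma esc_nonneg (d : ℕ) (U : Set (Pt d)) (x : Pt d) : 0 ≤ esc d U x := by
  classical
  unfold esc
  split_ifs
  · exact Real.iInf_nonneg fun T => qq_nonneg d U T x
  · exact le_rfl

/-- **Comparison of harmonic measure at two points.** Let `d ≥ 5`. There is
`c = c(d,n) > 0` such that if `A ∪ B` is an `n`-element subset of `ℤ^d` with `A` connected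
and `dist(A,B) ≥ 4^d n`, then for any distinct `x, y ∈ A` which are exposed in `A ∪ B`,
`H_{A∪B}(x) ≥ c H_{A∪B}(y)`. -/
theorem hm_comparison (d n : ℕ) (hd : 5 ≤ d) (hn : 1 ≤ n) :
    ∃ c : ℝ, 0 < c ∧
      ∀ A B : Finset (Pt d), Disjoint A B → (A ∪ B).card = n → LatConnected d A →
        (4 : ℝ) ^ d * (n : ℝ) ≤ setDist d A B →
        ∀ x ∈ A, ∀ y ∈ A, x ≠ y →
          0 < esc d (↑(A ∪ B)) x → 0 < esc d (↑(A ∪ B)) y →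
            c * harm d (↑(A ∪ B)) y ≤ harm d (↑(A ∪ B)) x := by
  have hd0 : 0 < d := by omega
  have hd1 : (0 : ℝ) < d := by exact_mod_cast hd0
  refine ⟨1 / 2 * (1 / (2 * d : ℝ)) ^ (n * (2 * (30 * n) + 1) ^ d), by positivity, ?_⟩
  intro A B _ hcard _ _ x _ y _ _ hx _
  have h1 := esc_lower d n hd (A ∪ B) hcard x hx
  have hcap : 0 ≤ capa d (↑(A ∪ B)) := tsum_nonneg fun z => esc_nonneg ..
  unfold harm
  rw [mul_div_assoc']
  refine div_le_div_of_nonneg_right ?_ hcap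
  refine le_trans ?_ h1
  exact mul_le_of_le_one_right (by positivity) (esc_le_one ..)

end HATFormal
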